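/- Let L be a linearized polynomial with coefficient vector a ∈ K^n such that the rank of L equals n−1, and let L* be its adjugate polynomial, i.e. the linearized polynomial whose i-th coefficient is adj(D(a))_{0,i}. Then L* has rank 1, the kernel of L* equals the image of L, and the image of L* equals the kernel of L (as F-subspaces of K). -/

import Mathlib

/-!
Write `D = D(a)` and let `v(x) = (x^{q^j})_j` be the Moore vector of `x ∈ K`. Since
`x^{q^n} = x`, the Dickson matrix intertwines the linearized polynomial with the Moore vector:
`D v(x) = v(L(x))` (`dicksonMatrix_mulVec`).

The matrix `D` is invariant under shifting both indices by `k` and undoing the resulting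
`q^k`-power, and taking adjugates preserves this symmetry, so `adj D` is again a Dickson matrix,
namely that of the coefficients of `L*` (`adjugate_dicksonMatrix`). As `L` has a nonzero kernel,
`det D = 0`, and `D adj D = adj D D = 0` becomes `L ∘ L* = L* ∘ L = 0`. Hence
`Im L ≤ ker L*` and `Im L* ≤ ker L`, where `ker L` is a line; both inclusions are equalities as
soon as `L* ≠ 0`.

For the latter, an `F`-basis `e` of `K` gives the Moore matrix `M = (e_j^{q^i})`, which is
invertible because a nonzero polynomial of degree less than `q^n` cannot vanish on all of `K`.
It satisfies `D M = M A` where `A` is the matrix of `L` over `F`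
(`dicksonMatrix_mul_mooreMatrix`). If `adj D = 0`, then `adj A = 0`, which is impossible for a
matrix of corank one (`adjugate_ne_zero_of_le_rank_add_one`). Thus `adj D ≠ 0`, and since `adj D`
is the Dickson matrix of `L*`, some coefficient of `L*` is nonzero, whence `L* ≠ 0`.
-/

open scoped BigOperators

/-- The Dickson matrix associated to a coefficient vector `a ∈ K^n`:
its `(i,j)`-entry is `(a_{(j-i) mod n})^(q^i)`. -/
def dicksonMatrix {K : Type*} [Field K] (q : ℕ) {n : ℕ} (a : Fin n → K) :
    Matrix (Fin n) (Fin n) K :=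
  Matrix.of fun i j => a (j - i) ^ q ^ (i : ℕ)

/-- Reduce to a diagonal matrix by transvections: if its adjugate vanishes, then for each `i` some
other diagonal entry is zero, so at least two of them are. -/
theorem adjugate_ne_zero_of_le_rank_add_one {F : Type*} [Field F] {n : ℕ} [NeZero n]
    (A : Matrix (Fin n) (Fin n) F) (h : n ≤ A.rank + 1) : A.adjugate ≠ 0 := by
  classical
  intro h0
  obtain ⟨L, L', d, hd⟩ := Matrix.Pivot.exists_list_transvec_mul_mul_list_transvec_eq_diagonal A
  have hrank : A.rank = (Matrix.diagonal d).rank := by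
    rw [← hd, Matrix.rank_mul_eq_left_of_isUnit_det, Matrix.rank_mul_eq_right_of_isUnit_det]
    · simp
    · simp
  have hadj : (Matrix.diagonal d).adjugate = 0 := by
    rw [← hd, Matrix.adjugate_mul_distrib, Matrix.adjugate_mul_distrib, h0]
    simp
  have hz : ∀ i, ∃ j, j ≠ i ∧ d j = 0 := by
    intro i
    have := congrFun (congrFun hadj i) i
    rw [Matrix.adjugate_diagonal, Matrix.diagonal_apply_eq, Matrix.zero_apply,
      Finset.prod_eq_zero_iff] at this
    obtain ⟨j, hj, hj0⟩ := this
    exact ⟨j, Finset.ne_of_mem_erase hj, hj0⟩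
  obtain ⟨i, -, hi⟩ := hz 0
  obtain ⟨j, hji, hj⟩ := hz i
  rw [hrank, Matrix.rank_diagonal, Fintype.card_subtype] at h
  have hsub : Finset.univ.filter (fun k => d k ≠ 0) ⊆ (Finset.univ.erase i).erase j := by
    intro k hk
    have hk' : d k ≠ 0 := by simpa using hk
    simp only [Finset.mem_erase, Finset.mem_univ, and_true]
    exact ⟨fun h => hk' (h ▸ hj), fun h => hk' (h ▸ hi)⟩
  have hle := Finset.card_le_card hsub
  have h1 : ((Finset.univ.erase i).erase j).card + 1 = (Finset.univ.erase i : Finset (Fin n)).card :=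
    Finset.card_erase_add_one (by simp [hji])
  have h2 : (Finset.univ.erase i : Finset (Fin n)).card + 1 = n := by
    rw [Finset.card_erase_add_one (Finset.mem_univ i)]; simp
  omega

section Dickson

variable {F K : Type*} [Field F] [Fintype F] [Field K] [Algebra F K]

/-- The `q^k`-power map, `q = #F`, as an `F`-algebra endomorphism of `K`. -/
noncomputable def frobPow (F K : Type*) [Field F] [Fintype F] [Field K] [Algebra F K] (k : ℕ) :
    K →ₐ[F] K :=
  FiniteField.frobeniusAlgHom F K ^ k

theorem frobPow_apply (k : ℕ) (x : K) : frobPow F K k x = x ^ Fintype.card F ^ k := by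
  rw [frobPow, AlgHom.coe_pow, FiniteField.coe_frobeniusAlgHom, pow_iterate]

variable [FiniteDimensional F K]

theorem pow_card_pow_mod {n : ℕ} (hn : n = Module.finrank F K) (x : K) (m : ℕ) :
    x ^ Fintype.card F ^ (m % n) = x ^ Fintype.card F ^ m := by
  have hx : ∀ t : ℕ, ∀ y : K, y ^ Fintype.card F ^ (n * t) = y := by
    have : Finite K := Module.finite_of_finite F
    have : Fintype K := Fintype.ofFinite K
    intro t y
    rw [pow_mul, hn, ← Module.card_eq_pow_finrank (K := F) (V := K)]
    exact FiniteField.pow_card_pow t y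
  conv_rhs => rw [← Nat.mod_add_div m n, pow_add, pow_mul, hx]

theorem dicksonMatrix_mulVec {n : ℕ} [NeZero n] (hn : n = Module.finrank F K) (c : Fin n → K)
    (x : K) (i : Fin n) :
    ∑ j : Fin n, dicksonMatrix (Fintype.card F) c i j * x ^ Fintype.card F ^ (j : ℕ) =
      (∑ k : Fin n, c k * x ^ Fintype.card F ^ (k : ℕ)) ^ Fintype.card F ^ (i : ℕ) := by
  rw [← frobPow_apply (F := F), map_sum, ← Equiv.sum_comp (Equiv.addRight i)]
  refine Finset.sum_congr rfl fun k _ => ?_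
  simp only [Equiv.coe_addRight, dicksonMatrix, Matrix.of_apply, add_sub_cancel_right, map_mul,
    frobPow_apply, Fin.val_add, pow_card_pow_mod hn]
  rw [pow_add, pow_mul]

/-- Dickson matrices are the matrices for which a simultaneous cyclic shift of rows and columns by
`k` amounts to raising all entries to the power `q^k`; the adjugate inherits this property. -/
theorem adjugate_dicksonMatrix {n : ℕ} [NeZero n] (hn : n = Module.finrank F K) (a : Fin n → K) :
    (dicksonMatrix (Fintype.card F) a).adjugate =
      dicksonMatrix (Fintype.card F) fun i => (dicksonMatrix (Fintype.card F) a).adjugate 0 i := by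
  set D := dicksonMatrix (Fintype.card F) a with hD
  have hshift : ∀ k : Fin n, D.submatrix (Equiv.addRight k) (Equiv.addRight k) =
      (frobPow F K k : K →+* K).mapMatrix D := by
    intro k
    ext i j
    simp only [hD, Matrix.submatrix_apply, Equiv.coe_addRight, dicksonMatrix, Matrix.of_apply,
      add_sub_add_right_eq_sub, Fin.val_add, pow_card_pow_mod hn, RingHom.mapMatrix_apply,
      Matrix.map_apply, RingHom.coe_coe, frobPow_apply]
    rw [pow_add, pow_mul]
  ext k j
  have h := congrFun (congrFun (congrArg Matrix.adjugate (hshift k)) 0) (j - k)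
  rw [Matrix.adjugate_submatrix_equiv_self, ← RingHom.map_adjugate] at h
  simpa [frobPow_apply, dicksonMatrix] using h

theorem linearized_coeff_eq_zero {n : ℕ} (hn : n = Module.finrank F K) (c : Fin n → K)
    (h : ∀ x : K, ∑ i : Fin n, c i * x ^ Fintype.card F ^ (i : ℕ) = 0) : c = 0 := by
  have : Finite K := Module.finite_of_finite F
  have : Fintype K := Fintype.ofFinite K
  have hq : 1 < Fintype.card F := Fintype.one_lt_card
  set p : Polynomial K := ∑ i : Fin n, Polynomial.monomial (Fintype.card F ^ (i : ℕ)) (c i) with hp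
  have hdeg : p.degree < (Fintype.card K : ℕ) := by
    refine (Polynomial.degree_sum_le _ _).trans_lt ?_
    rw [Finset.sup_lt_iff (by exact WithBot.bot_lt_coe _)]
    intro i _
    refine (Polynomial.degree_monomial_le _ _).trans_lt ?_
    rw [Module.card_eq_pow_finrank (K := F) (V := K), ← hn]
    exact_mod_cast Nat.pow_lt_pow_right hq i.2
  have hp0 : p = 0 := by
    by_contra hne
    refine hne (Polynomial.eq_zero_of_natDegree_lt_card_of_eval_eq_zero p
      Function.injective_id (fun x => ?_) ?_)
    · simpa [hp, Polynomial.eval_finsetSum] using h x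
    · exact (Polynomial.natDegree_lt_iff_degree_lt hne).2 hdeg
  funext i
  have := congrArg (fun r => Polynomial.coeff r (Fintype.card F ^ (i : ℕ))) hp0
  simp only [hp, Polynomial.finsetSum_coeff, Polynomial.coeff_monomial, Polynomial.coeff_zero,
    Nat.pow_right_inj hq, Fin.val_inj] at this
  simpa using this

/-- The Moore matrix `(e_j^{q^i})` of a family `e` of elements of `K`, with `q = #F`. -/
def mooreMatrix (F : Type*) {K : Type*} [Fintype F] [Field K] {n : ℕ} (e : Fin n → K) :
    Matrix (Fin n) (Fin n) K :=
  Matrix.of fun i j => e j ^ Fintype.card F ^ (i : ℕ)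

/-- A vector in the left kernel is the coefficient vector of a linearized polynomial vanishing on
a basis, hence on all of `K`. -/
theorem det_mooreMatrix_ne_zero {n : ℕ} (hn : n = Module.finrank F K)
    (e : Module.Basis (Fin n) F K) : (mooreMatrix F e).det ≠ 0 := by
  intro h0
  obtain ⟨c, hc, hcM⟩ := Matrix.exists_vecMul_eq_zero_iff.2 h0
  refine hc (linearized_coeff_eq_zero (F := F) hn c fun x => ?_)
  have hl : (∑ i : Fin n, c i • (frobPow F K (i : ℕ)).toLinearMap : K →ₗ[F] K) = 0 := by
    refine e.ext fun j => ?_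
    have := congrFun hcM j
    simpa [Matrix.vecMul, dotProduct, mooreMatrix, frobPow_apply] using this
  simpa [frobPow_apply] using LinearMap.congr_fun hl x

/-- Over `K`, the Dickson matrix is conjugate, via the Moore matrix of a basis, to the matrix of
the linearized polynomial in that basis. -/
theorem dicksonMatrix_mul_mooreMatrix {n : ℕ} [NeZero n] (hn : n = Module.finrank F K)
    (a : Fin n → K) (f : K →ₗ[F] K)
    (hf : ∀ x : K, f x = ∑ i : Fin n, a i * x ^ Fintype.card F ^ (i : ℕ))
    (e : Module.Basis (Fin n) F K) :
    dicksonMatrix (Fintype.card F) a * mooreMatrix F e =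
      mooreMatrix F e * (algebraMap F K).mapMatrix (LinearMap.toMatrix e e f) := by
  ext i j
  have hfe : f (e j) = ∑ k, LinearMap.toMatrix e e f k j • e k := by
    simp [LinearMap.toMatrix_apply, e.sum_repr]
  rw [Matrix.mul_apply, Matrix.mul_apply]
  simp only [mooreMatrix, Matrix.of_apply]
  rw [dicksonMatrix_mulVec hn, ← hf, ← frobPow_apply (F := F), hfe, map_sum]
  refine Finset.sum_congr rfl fun k _ => ?_
  rw [map_smul, frobPow_apply, Algebra.smul_def, mul_comm]
  rfl

end Dickson

/-- If the linearized polynomial `L` has rank `n - 1` and `L*` is its adjugate polynomial,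
then `L*` has rank `1`, `ker L* = Im L` and `Im L* = ker L`. -/
theorem stmt11 (F K : Type*) [Field F] [Fintype F] [Field K] [Algebra F K]
    [FiniteDimensional F K] (q n : ℕ) [NeZero n] (hq : q = Fintype.card F)
    (hn : n = Module.finrank F K) (a : Fin n → K) (f g : K →ₗ[F] K)
    (hf : ∀ x : K, f x = ∑ i : Fin n, a i * x ^ q ^ (i : ℕ))
    (hrk : Module.finrank F (LinearMap.range f) = n - 1)
    (hg : ∀ x : K, g x = ∑ i : Fin n, (dicksonMatrix q a).adjugate 0 i * x ^ q ^ (i : ℕ)) :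
    Module.finrank F (LinearMap.range g) = 1 ∧
    LinearMap.ker g = LinearMap.range f ∧
    LinearMap.range g = LinearMap.ker f := by
  subst hq
  have hn0 : n ≠ 0 := NeZero.ne n
  set D := dicksonMatrix (Fintype.card F) a with hD
  have hadj := adjugate_dicksonMatrix (F := F) hn a
  have hDf : ∀ x : K, D.mulVec (fun j : Fin n => x ^ Fintype.card F ^ (j : ℕ)) =
      fun i : Fin n => f x ^ Fintype.card F ^ (i : ℕ) := fun x => by
    funext i
    rw [hf]
    exact dicksonMatrix_mulVec hn a x i
  have hDg : ∀ x : K, D.adjugate.mulVec (fun j : Fin n => x ^ Fintype.card F ^ (j : ℕ)) =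
      fun i : Fin n => g x ^ Fintype.card F ^ (i : ℕ) := fun x => by
    funext i
    rw [hadj, hg]
    exact dicksonMatrix_mulVec hn _ x i
  have hfn := LinearMap.finrank_range_add_finrank_ker f
  have hgn := LinearMap.finrank_range_add_finrank_ker g
  have hkf : Module.finrank F (LinearMap.ker f) = 1 := by omega
  have hdet : D.det = 0 := by
    obtain ⟨x, hx, -⟩ := finrank_eq_one_iff'.1 hkf
    refine Matrix.exists_mulVec_eq_zero_iff.1
      ⟨fun j => (x : K) ^ Fintype.card F ^ (j : ℕ), fun h => hx ?_, ?_⟩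
    · simpa using congrFun h 0
    · rw [hDf, LinearMap.mem_ker.1 x.2]
      funext i
      simp
  -- Coordinate `0` of the Moore vector of `y` is `y` itself.
  have hgf : ∀ x, g (f x) = 0 := fun x => by
    have h := hDg (f x)
    rw [← hDf, Matrix.mulVec_mulVec, Matrix.adjugate_mul, hdet] at h
    simpa using (congrFun h 0).symm
  have hfg : ∀ x, f (g x) = 0 := fun x => by
    have h := hDf (g x)
    rw [← hDg, Matrix.mulVec_mulVec, Matrix.mul_adjugate, hdet] at h
    simpa using (congrFun h 0).symm
  have hadj0 : D.adjugate ≠ 0 := by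
    intro h0
    let e : Module.Basis (Fin n) F K := Module.finBasisOfFinrankEq F K hn.symm
    have hM := det_mooreMatrix_ne_zero hn e
    have h := congrArg Matrix.adjugate (dicksonMatrix_mul_mooreMatrix hn a f hf e)
    rw [Matrix.adjugate_mul_distrib, Matrix.adjugate_mul_distrib, ← hD, h0, Matrix.mul_zero,
      ← RingHom.map_adjugate] at h
    have h' := congrArg (· * mooreMatrix F e) h
    simp only [Matrix.zero_mul, Matrix.mul_assoc, Matrix.adjugate_mul, Matrix.mul_smul,
      Matrix.mul_one] at h'
    have h'' := (smul_eq_zero.1 h'.symm).resolve_left hM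
    refine adjugate_ne_zero_of_le_rank_add_one (LinearMap.toMatrix e e f) ?_ ?_
    · rw [Matrix.rank_eq_finrank_range_toLin _ e e, Matrix.toLin_toMatrix]
      omega
    · ext i j
      have := congrFun (congrFun h'' i) j
      simpa using this
  have hg0 : g ≠ 0 := by
    intro h0
    have hb : (fun i => D.adjugate 0 i) = 0 :=
      linearized_coeff_eq_zero (F := F) hn _ fun x => by rw [← hg, h0]; rfl
    refine hadj0 ?_
    rw [hadj, hb]
    ext i j
    simp [dicksonMatrix]
  have hle : LinearMap.range g ≤ LinearMap.ker f := by
    rintro _ ⟨x, rfl⟩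
    exact hfg x
  have hle' : LinearMap.range f ≤ LinearMap.ker g := by
    rintro _ ⟨x, rfl⟩
    exact hgf x
  have hpos : Module.finrank F (LinearMap.range g) ≠ 0 := fun h =>
    hg0 (LinearMap.range_eq_bot.1 (Submodule.finrank_eq_zero.1 h))
  have hmono := Submodule.finrank_mono hle
  have h1 : Module.finrank F (LinearMap.range g) = 1 := by omega
  exact ⟨h1, (Submodule.eq_of_le_of_finrank_eq hle' (by omega)).symm,
    Submodule.eq_of_le_of_finrank_eq hle (by omega)⟩
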